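/- arXiv:1501.02121 — 6 statements merged into one kernel-verified Lean document; each statement's English description precedes it below -/
import Mathlib

section
/- Let (X,d) be a Polish space and f a continuous semi-flow on X. If (X,f) is chaotic, then (X,f) has sensitive dependence on initial data: there exists a constant ε > 0 such that for every x ∈ X there is a dense Gδ subset S of X with limsup_{t→+∞} d(f^t(x), f^t(y)) ≥ ε for every y ∈ S. -/
open Filter Topology Metric Set TopologicalSpace

/-- `f` is a continuous semi-flow on `X`: jointly continuous on `[0,∞) × X`,
`f 0 x = x`, and `f s (f t x) = f (s+t) x` for `s, t ≥ 0`. -/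
def IsSemiflow {X : Type*} [MetricSpace X] (f : ℝ → X → X) : Prop :=
  ContinuousOn (fun p : ℝ × X => f p.1 p.2) (Set.Ici 0 ×ˢ Set.univ) ∧
  (∀ x, f 0 x = x) ∧
  (∀ s t : ℝ, 0 ≤ s → 0 ≤ t → ∀ x, f s (f t x) = f (s + t) x)

/-- the forward orbit `O₊(f,x) = {f t x : t ≥ 0}`. -/
def posOrbit {X : Type*} [MetricSpace X] (f : ℝ → X → X) (x : X) : Set X :=
  (fun t => f t x) '' Set.Ici (0 : ℝ)

/-- `x` is Birkhoff recurrent for `f`. -/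
def BirkhoffRecurrent {X : Type*} [MetricSpace X] (f : ℝ → X → X) (x : X) : Prop :=
  ∀ ε > (0:ℝ), ∃ T > (0:ℝ), ∀ τ ≥ (0:ℝ), ∀ υ ≥ (0:ℝ),
    ∃ t : ℝ, τ < t ∧ t < τ + T ∧ dist (f υ x) (f t x) < ε

/-- `f` is topologically quasi-transitive: some forward orbit is dense. -/
def QuasiTransitive {X : Type*} [MetricSpace X] (f : ℝ → X → X) : Prop :=
  ∃ x : X, Dense (posOrbit f x)

/-- `(X,f)` is chaotic: quasi-transitive, Birkhoff recurrent points dense, and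
two motions far away from each other. -/
def Chaotic {X : Type*} [MetricSpace X] (f : ℝ → X → X) : Prop :=
  QuasiTransitive f ∧ Dense {x : X | BirkhoffRecurrent f x} ∧
  ∃ x y : X, closure (posOrbit f x) ∩ closure (posOrbit f y) = ∅

/-!
Some orbit is not dense; a Birkhoff recurrent point outside its closure has a compact orbit closure
disjoint from it, because orbit closures of recurrent points are minimal. Hence, for some `δ > 0`,
the `δ`-ball around any point misses an entire orbit. Let `U` be open, `z ∈ U` recurrent, and let
the orbit of `q` miss the `δ`-ball around `z`. The point `z` comes back close to itself within every
time window of some length `T`, whereas by transitivity and recurrence some `y ∈ U` comes, at an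
arbitrarily late time, so close to `q` that it then follows the orbit of `q` for a time `T`. Hence
the motions of `y` and `z` are far apart at some late time, and no motion can be close to both.
So the points separating from a given motion after time `N` form a dense open set, for every `N`,
and Baire's theorem applies.
-/

section Semiflow

variable {X : Type*} [MetricSpace X] {f : ℝ → X → X}

lemma Chaotic.exists_not_dense_posOrbit (hc : Chaotic f) : ∃ a, ¬Dense (posOrbit f a) := by
  obtain ⟨-, -, a, b, hab⟩ := hc
  refine ⟨a, fun ha => ?_⟩
  rw [ha.closure_eq, univ_inter, closure_empty_iff] at hab
  exact (nonempty_Ici.image _).ne_empty hab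

namespace IsSemiflow

lemma map_zero (hf : IsSemiflow f) (x : X) : f 0 x = x :=
  hf.2.1 x

lemma map_map (hf : IsSemiflow f) {s t : ℝ} (hs : 0 ≤ s) (ht : 0 ≤ t) (x : X) :
    f s (f t x) = f (s + t) x :=
  hf.2.2 s t hs ht x

lemma map_sub_map (hf : IsSemiflow f) {s t : ℝ} (hs : 0 ≤ s) (hst : s ≤ t) (x : X) :
    f (t - s) (f s x) = f t x := by
  rw [hf.map_map (sub_nonneg.2 hst) hs, sub_add_cancel]

lemma continuous_apply (hf : IsSemiflow f) {t : ℝ} (ht : 0 ≤ t) : Continuous (f t) :=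
  hf.1.comp_continuous (f := fun x => (t, x)) (by fun_prop) fun _ => ⟨ht, mem_univ _⟩

lemma continuousOn_orbit (hf : IsSemiflow f) (x : X) : ContinuousOn (fun t => f t x) (Ici 0) :=
  hf.1.comp (f := fun t => (t, x)) (by fun_prop) fun _ ht => ⟨ht, mem_univ _⟩

lemma eventually_forall_dist_lt (hf : IsSemiflow f) (x : X) (T : ℝ) {ε : ℝ} (hε : 0 < ε) :
    ∀ᶠ y in 𝓝 x, ∀ s ∈ Icc 0 T, dist (f s y) (f s x) < ε := by
  have hcont : ContinuousOn (Function.uncurry fun y s => f s y) (univ ×ˢ Icc (0 : ℝ) T) :=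
    hf.1.comp continuous_swap.continuousOn fun p hp => ⟨hp.2.1, mem_univ _⟩
  obtain ⟨v, hv, hdist⟩ :=
    isCompact_Icc.mem_uniformity_of_prod hcont (mem_univ x) (dist_mem_uniformity hε)
  rw [nhdsWithin_univ] at hv
  exact mem_of_superset hv hdist

lemma mapsTo_closure_posOrbit (hf : IsSemiflow f) {s : ℝ} (hs : 0 ≤ s) (x : X) :
    MapsTo (f s) (closure (posOrbit f x)) (closure (posOrbit f x)) := by
  refine MapsTo.closure ?_ (hf.continuous_apply hs)
  rintro _ ⟨t, ht, rfl⟩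
  exact ⟨s + t, add_nonneg hs ht, (hf.map_map hs ht x).symm⟩

lemma closure_posOrbit_subset (hf : IsSemiflow f) {a c : X} (hc : c ∈ closure (posOrbit f a)) :
    closure (posOrbit f c) ⊆ closure (posOrbit f a) := by
  refine closure_minimal ?_ isClosed_closure
  rintro _ ⟨s, hs, rfl⟩
  exact hf.mapsTo_closure_posOrbit hs a hc

end IsSemiflow

namespace BirkhoffRecurrent

lemma frequently_mem {z : X} (hz : BirkhoffRecurrent f z) {W : Set X} (hW : IsOpen W) {s : ℝ}
    (hs : 0 ≤ s) (hsW : f s z ∈ W) : ∃ᶠ t in atTop, f t z ∈ W := by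
  obtain ⟨ε, hε, hball⟩ := Metric.isOpen_iff.1 hW _ hsW
  obtain ⟨T, -, hreturn⟩ := hz ε hε
  refine frequently_atTop'.2 fun M => ?_
  obtain ⟨t, hMt, -, hdist⟩ := hreturn (max M 0) (le_max_right M 0) s hs
  exact ⟨t, (le_max_left M 0).trans_lt hMt, hball (mem_ball'.2 hdist)⟩

lemma exists_dist_lt {z : X} (hz : BirkhoffRecurrent f z) (hf : IsSemiflow f) {ε : ℝ}
    (hε : 0 < ε) : ∃ T, ∀ τ ≥ 0, ∃ t ∈ Ioo τ (τ + T), dist z (f t z) < ε := by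
  obtain ⟨T, -, hreturn⟩ := hz ε hε
  refine ⟨T, fun τ hτ => ?_⟩
  obtain ⟨t, hτt, htT, hdist⟩ := hreturn τ hτ 0 le_rfl
  exact ⟨t, ⟨hτt, htT⟩, by rwa [hf.map_zero] at hdist⟩

lemma totallyBounded_posOrbit {p : X} (hp : BirkhoffRecurrent f p) (hf : IsSemiflow f) :
    TotallyBounded (posOrbit f p) := by
  rw [Metric.totallyBounded_iff]
  intro ε hε
  obtain ⟨T, -, hreturn⟩ := hp (ε / 2) (half_pos hε)
  have hsegment : IsCompact ((fun t => f t p) '' Icc 0 T) :=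
    isCompact_Icc.image_of_continuousOn ((hf.continuousOn_orbit p).mono Icc_subset_Ici_self)
  obtain ⟨F, hF, hcover⟩ :=
    Metric.totallyBounded_iff.1 hsegment.totallyBounded (ε / 2) (half_pos hε)
  refine ⟨F, hF, ?_⟩
  rintro _ ⟨s, hs, rfl⟩
  obtain ⟨t, ht, htT, hdist⟩ := hreturn 0 le_rfl s hs
  obtain ⟨y, hy, hty⟩ := mem_iUnion₂.1 (hcover ⟨t, ⟨ht.le, by linarith⟩, rfl⟩)
  refine mem_biUnion hy ?_
  calc dist (f s p) y ≤ dist (f s p) (f t p) + dist (f t p) y := dist_triangle _ _ _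
    _ < ε / 2 + ε / 2 := add_lt_add hdist hty
    _ = ε := add_halves ε

lemma isCompact_closure_posOrbit [CompleteSpace X] {p : X} (hp : BirkhoffRecurrent f p)
    (hf : IsSemiflow f) : IsCompact (closure (posOrbit f p)) :=
  (hp.totallyBounded_posOrbit hf).closure.isCompact_of_isClosed isClosed_closure

lemma mem_closure_posOrbit_symm {p c : X} (hp : BirkhoffRecurrent f p) (hf : IsSemiflow f)
    (hc : c ∈ closure (posOrbit f p)) : p ∈ closure (posOrbit f c) := by
  rw [Metric.mem_closure_iff]
  intro ε hε
  obtain ⟨T, hreturn⟩ := hp.exists_dist_lt hf (half_pos hε)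
  -- `c` shadows the orbit of `p` from time `s` on, long enough to include a return of `p`.
  obtain ⟨_, hshadow, ⟨s, hs, rfl⟩⟩ :=
    mem_closure_iff_nhds.1 hc _ (hf.eventually_forall_dist_lt c T (half_pos hε))
  obtain ⟨t, ⟨hst, htT⟩, hpt⟩ := hreturn s hs
  have htc : dist (f t p) (f (t - s) c) < ε / 2 := by
    simpa only [hf.map_sub_map hs hst.le] using
      hshadow (t - s) ⟨sub_nonneg.2 hst.le, by linarith⟩
  refine ⟨f (t - s) c, ⟨t - s, sub_nonneg.2 hst.le, rfl⟩, ?_⟩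
  calc dist p (f (t - s) c) ≤ dist p (f t p) + dist (f t p) (f (t - s) c) := dist_triangle _ _ _
    _ < ε / 2 + ε / 2 := add_lt_add hpt htc
    _ = ε := add_halves ε

lemma disjoint_closure_posOrbit {p a : X} (hp : BirkhoffRecurrent f p) (hf : IsSemiflow f)
    (hpa : p ∉ closure (posOrbit f a)) :
    Disjoint (closure (posOrbit f p)) (closure (posOrbit f a)) :=
  Set.disjoint_left.2 fun _ hcp hca =>
    hpa (hf.closure_posOrbit_subset hca (hp.mem_closure_posOrbit_symm hf hcp))

end BirkhoffRecurrent

namespace IsSemiflow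

lemma exists_forall_disjoint_ball_posOrbit [CompleteSpace X] (hf : IsSemiflow f)
    (hrec : Dense {x | BirkhoffRecurrent f x}) {a : X} (ha : ¬Dense (posOrbit f a)) :
    ∃ δ > 0, ∀ z, ∃ q, Disjoint (ball z δ) (posOrbit f q) := by
  obtain ⟨p, hp, hpa⟩ := hrec.exists_mem_open isClosed_closure.isOpen_compl
    (nonempty_compl.2 (mt dense_iff_closure_eq.2 ha))
  obtain ⟨δ, hδ, hdisj⟩ := (hp.disjoint_closure_posOrbit hf hpa).exists_thickenings
    (hp.isCompact_closure_posOrbit hf) isClosed_closure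
  simp only [thickening_closure] at hdisj
  have disjoint_ball {z q : X} (hz : z ∉ thickening δ (posOrbit f q)) :
      Disjoint (ball z δ) (posOrbit f q) :=
    Set.disjoint_left.2 fun y hy hyq => hz (mem_thickening_iff.2 ⟨y, hyq, mem_ball'.1 hy⟩)
  refine ⟨δ, hδ, fun z => ?_⟩
  by_cases hz : z ∈ thickening δ (posOrbit f p)
  · exact ⟨a, disjoint_ball (Set.disjoint_left.1 hdisj hz)⟩
  · exact ⟨p, disjoint_ball hz⟩

lemma exists_map_mem (hf : IsSemiflow f) (htrans : QuasiTransitive f)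
    (hrec : Dense {x | BirkhoffRecurrent f x}) {U V : Set X} (hU : IsOpen U) (hV : IsOpen V)
    (hUne : U.Nonempty) (hVne : V.Nonempty) : ∃ y ∈ U, ∃ t ≥ 0, f t y ∈ V := by
  obtain ⟨x, hx⟩ := htrans
  obtain ⟨_, ⟨s, hs, rfl⟩, hsU⟩ := hx.exists_mem_open hU hUne
  obtain ⟨_, ⟨t, ht, rfl⟩, htV⟩ := hx.exists_mem_open hV hVne
  rcases le_total s t with hst | hts
  · exact ⟨f s x, hsU, t - s, sub_nonneg.2 hst, by rwa [hf.map_sub_map hs hst]⟩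
  · -- The dense orbit visits `V` before `U`: a recurrent point doing likewise returns to `V`.
    have hr : 0 ≤ s - t := sub_nonneg.2 hts
    obtain ⟨z, hz, hzV, hzU⟩ := hrec.exists_mem_open
      (hV.inter (hU.preimage (hf.continuous_apply hr)))
      ⟨f t x, htV, by rwa [mem_preimage, hf.map_sub_map ht hts]⟩
    obtain ⟨r, hsr, hrV⟩ := frequently_atTop.1
      (hz.frequently_mem hV le_rfl (by rwa [hf.map_zero])) (s - t)
    exact ⟨f (s - t) z, hzU, r - (s - t), sub_nonneg.2 hsr, by rwa [hf.map_sub_map hr hsr]⟩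

lemma exists_frequently_map_mem (hf : IsSemiflow f) (htrans : QuasiTransitive f)
    (hrec : Dense {x | BirkhoffRecurrent f x}) {U V : Set X} (hU : IsOpen U) (hV : IsOpen V)
    (hUne : U.Nonempty) (hVne : V.Nonempty) : ∃ y ∈ U, ∃ᶠ t in atTop, f t y ∈ V := by
  obtain ⟨y, hyU, t, ht, hyV⟩ := hf.exists_map_mem htrans hrec hU hV hUne hVne
  obtain ⟨z, hz, hzU, hzV⟩ := hrec.exists_mem_open
    (hU.inter (hV.preimage (hf.continuous_apply ht))) ⟨y, hyU, hyV⟩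
  exact ⟨z, hzU, hz.frequently_mem hV ht hzV⟩

lemma exists_lt_dist_of_forall_disjoint_ball (hf : IsSemiflow f) (htrans : QuasiTransitive f)
    (hrec : Dense {x | BirkhoffRecurrent f x}) {δ : ℝ} (hδ : 0 < δ)
    (hfar : ∀ z, ∃ q, Disjoint (ball z δ) (posOrbit f q)) {U : Set X} (hU : IsOpen U)
    (hUne : U.Nonempty) (N : ℝ) : ∃ y ∈ U, ∃ z ∈ U, ∃ t > N, δ / 2 < dist (f t y) (f t z) := by
  have hδ4 : 0 < δ / 4 := by positivity
  obtain ⟨z, hz, hzU⟩ := hrec.exists_mem_open hU hUne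
  obtain ⟨q, hq⟩ := hfar z
  obtain ⟨T, hreturn⟩ := hz.exists_dist_lt hf hδ4
  obtain ⟨V, hV, hVo, hqV⟩ := _root_.mem_nhds_iff.1 (hf.eventually_forall_dist_lt q T hδ4)
  obtain ⟨y, hyU, hyV⟩ := hf.exists_frequently_map_mem htrans hrec hU hVo hUne ⟨q, hqV⟩
  obtain ⟨k, hk, hkV⟩ := frequently_atTop.1 hyV (max N 0)
  obtain ⟨hNk, hk0⟩ := max_le_iff.1 hk
  obtain ⟨t, ⟨hkt, htT⟩, hzt⟩ := hreturn k hk0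
  have htk : 0 ≤ t - k := sub_nonneg.2 hkt.le
  have hyq : dist (f t y) (f (t - k) q) < δ / 4 := by
    simpa only [hf.map_sub_map hk0 hkt.le] using hV hkV (t - k) ⟨htk, by linarith⟩
  have hzq : δ ≤ dist z (f (t - k) q) := by
    rw [dist_comm]
    exact not_lt.1 (Set.disjoint_right.1 hq ⟨t - k, htk, rfl⟩)
  refine ⟨y, hyU, z, hzU, t, hNk.trans_lt hkt, ?_⟩
  have htriangle : dist z (f (t - k) q) ≤
      dist z (f t z) + dist (f t y) (f t z) + dist (f t y) (f (t - k) q) := by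
    rw [dist_comm (f t y) (f t z)]
    exact dist_triangle4 _ _ _ _
  linarith

end IsSemiflow

/-- The set of initial points whose motion is more than `ε` away from the motion of `x` at some
time later than `N`. The points in these sets for all `N` are those whose motion separates from
that of `x` infinitely often. -/
def separatedAfter (f : ℝ → X → X) (x : X) (ε N : ℝ) : Set X :=
  {y | ∃ t > N, ε < dist (f t x) (f t y)}

lemma isOpen_separatedAfter (hf : IsSemiflow f) (x : X) (ε : ℝ) {N : ℝ} (hN : 0 ≤ N) :
    IsOpen (separatedAfter f x ε N) := by
  have heq : separatedAfter f x ε N = ⋃ t ∈ Ioi N, {y | ε < dist (f t x) (f t y)} := by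
    ext y
    simp only [separatedAfter, mem_ofPred_eq, mem_iUnion₂, mem_Ioi, exists_prop, gt_iff_lt]
  rw [heq]
  exact isOpen_biUnion fun t ht => isOpen_lt continuous_const
    (continuous_const.dist (hf.continuous_apply (hN.trans (le_of_lt ht))))

lemma dense_separatedAfter {ε N : ℝ}
    (hsep : ∀ U : Set X, IsOpen U → U.Nonempty →
      ∃ y ∈ U, ∃ z ∈ U, ∃ t > N, ε < dist (f t y) (f t z)) (x : X) :
    Dense (separatedAfter f x (ε / 2) N) := by
  refine dense_iff_inter_open.2 fun U hU hUne => ?_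
  obtain ⟨y, hyU, z, hzU, t, ht, hyz⟩ := hsep U hU hUne
  have hxyz : dist (f t y) (f t z) ≤ dist (f t x) (f t y) + dist (f t x) (f t z) :=
    dist_triangle_left _ _ _
  rcases lt_or_ge (ε / 2) (dist (f t x) (f t y)) with hy | hy
  · exact ⟨y, hyU, t, ht, hy⟩
  · exact ⟨z, hzU, t, ht, by linarith⟩

lemma le_limsup_dist_of_forall_mem_separatedAfter {x y : X} {ε : ℝ}
    (hy : ∀ N : ℕ, y ∈ separatedAfter f x ε N) :
    (ε : EReal) ≤ limsup (fun t => (dist (f t x) (f t y) : EReal)) atTop := by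
  refine le_limsup_of_frequently_le (frequently_atTop.2 fun M => ?_)
  obtain ⟨N, hN⟩ := exists_nat_ge M
  obtain ⟨t, ht, hdist⟩ := hy N
  exact ⟨t, hN.trans (le_of_lt ht), EReal.coe_le_coe hdist.le⟩

lemma exists_dense_isGδ_le_limsup_dist [BaireSpace X] (hf : IsSemiflow f) {ε : ℝ}
    (hsep : ∀ U : Set X, IsOpen U → U.Nonempty → ∀ N : ℝ,
      ∃ y ∈ U, ∃ z ∈ U, ∃ t > N, ε < dist (f t y) (f t z)) (x : X) :
    ∃ S : Set X, Dense S ∧ IsGδ S ∧ ∀ y ∈ S,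
      ((ε / 2 : ℝ) : EReal) ≤ limsup (fun t => (dist (f t x) (f t y) : EReal)) atTop := by
  have hopen (N : ℕ) : IsOpen (separatedAfter f x (ε / 2) N) :=
    isOpen_separatedAfter hf x (ε / 2) N.cast_nonneg
  have hdense (N : ℕ) : Dense (separatedAfter f x (ε / 2) N) :=
    dense_separatedAfter (fun U hU hUne => hsep U hU hUne N) x
  exact ⟨⋂ N : ℕ, separatedAfter f x (ε / 2) N, dense_iInter_of_isOpen hopen hdense,
    .iInter_of_isOpen hopen,
    fun y hy => le_limsup_dist_of_forall_mem_separatedAfter (mem_iInter.1 hy)⟩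

end Semiflow

/-- If `(X,f)` is chaotic on a Polish space, then it has sensitive
dependence on initial data. -/
theorem chaotic_implies_sensitive {X : Type*} [MetricSpace X] [CompleteSpace X]
    [SeparableSpace X] (f : ℝ → X → X) (hf : IsSemiflow f) (hc : Chaotic f) :
    ∃ ε : ℝ, 0 < ε ∧ ∀ x : X, ∃ S : Set X, Dense S ∧ IsGδ S ∧
      ∀ y ∈ S, (ε : EReal) ≤
        Filter.limsup (fun t : ℝ => (dist (f t x) (f t y) : EReal)) Filter.atTop := by
  obtain ⟨a, ha⟩ := hc.exists_not_dense_posOrbit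
  obtain ⟨htrans, hrec, -⟩ := hc
  obtain ⟨δ, hδ, hfar⟩ := hf.exists_forall_disjoint_ball_posOrbit hrec ha
  exact ⟨δ / 2 / 2, by positivity, exists_dense_isGδ_le_limsup_dist hf
    fun _ hU hUne N => hf.exists_lt_dist_of_forall_disjoint_ball htrans hrec hδ hfar hU hUne N⟩
end

section
/- Let (X,d) be a Polish space and f a continuous semi-flow on X. If there exists at least one nonempty closed f-invariant subset Λ₀ of X such that the restricted system (Λ₀, f) is chaotic, then there exists a maximal chaotic subsystem: a nonempty closed f-invariant subset Λ such that (Λ, f) is chaotic and there is no closed f-invariant subset Λ' with Λ ⊊ Λ' for which (Λ', f) is chaotic. -/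
open Filter Topology Metric Set TopologicalSpace

/-- `Λ` is invariant under the semi-flow `f`. -/
def InvariantSet {X : Type*} [MetricSpace X] (f : ℝ → X → X) (Λ : Set X) : Prop :=
  ∀ t ≥ (0:ℝ), ∀ x ∈ Λ, f t x ∈ Λ

/-- the restricted subsystem `(Λ, f)` is chaotic. -/
def ChaoticOn {X : Type*} [MetricSpace X] (f : ℝ → X → X) (Λ : Set X) : Prop :=
  (∃ x ∈ Λ, Λ ⊆ closure (posOrbit f x)) ∧
  (Λ ⊆ closure ({x : X | BirkhoffRecurrent f x} ∩ Λ)) ∧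
  ∃ x ∈ Λ, ∃ y ∈ Λ, closure (posOrbit f x) ∩ closure (posOrbit f y) = ∅

/-!
Zorn's lemma reduces the theorem to showing that the closure `K` of the union of a chain of chaotic
subsystems is chaotic; only a dense orbit in `K` is not inherited at once from the members. Dense
orbits do not pass to the limit, but topological transitivity does, and by Baire's theorem
transitivity of `K` yields a dense orbit. The members are transitive because of their recurrent
points: a dense orbit may visit an open set `V` only before it reaches `U`, but it also comes close
to a recurrent point of `V`, which it then follows back into `V` at an arbitrarily late time.
-/

section Orbits

variable {X : Type*} [MetricSpace X] {f : ℝ → X → X}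

theorem posOrbit_inter_nonempty_iff {x : X} {V : Set X} :
    (posOrbit f x ∩ V).Nonempty ↔ ∃ t ≥ 0, f t x ∈ V :=
  image_inter_nonempty_iff

theorem isOpen_setOf_posOrbit_inter_nonempty (hcont : ∀ t ≥ 0, Continuous (f t)) {V : Set X}
    (hV : IsOpen V) : IsOpen {x | (posOrbit f x ∩ V).Nonempty} := by
  have eq_iUnion : {x | (posOrbit f x ∩ V).Nonempty} = ⋃ t ≥ 0, f t ⁻¹' V := by
    ext x
    simp only [mem_ofPred_eq, posOrbit_inter_nonempty_iff, mem_iUnion, mem_preimage, exists_prop]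
  rw [eq_iUnion]
  exact isOpen_biUnion fun t ht => hV.preimage (hcont t ht)

theorem BirkhoffRecurrent.frequently_mem_s2 {x : X} {V : Set X} (hx : BirkhoffRecurrent f x)
    (hzero : f 0 x = x) (hV : V ∈ 𝓝 x) : ∃ᶠ t in atTop, f t x ∈ V := by
  obtain ⟨ε, hε, hball⟩ := Metric.mem_nhds_iff.1 hV
  obtain ⟨T, -, hT⟩ := hx ε hε
  refine frequently_atTop'.2 fun s => ?_
  obtain ⟨t, hst, -, hdist⟩ := hT (max s 0) (le_max_right s 0) 0 le_rfl
  rw [hzero, dist_comm] at hdist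
  exact ⟨t, (le_max_left s 0).trans_lt hst, hball hdist⟩

protected theorem IsSemiflow.continuous (hf : IsSemiflow f) {t : ℝ} (ht : 0 ≤ t) :
    Continuous (f t) :=
  hf.1.comp_continuous (Continuous.prodMk_right t) fun _ => ⟨ht, trivial⟩

protected theorem InvariantSet.closure {Λ : Set X} (hΛ : InvariantSet f Λ)
    (hcont : ∀ t ≥ 0, Continuous (f t)) : InvariantSet f (closure Λ) :=
  fun t ht _ hx => map_mem_closure (hcont t ht) hx (hΛ t ht)

protected theorem InvariantSet.sUnion {c : Set (Set X)} (hc : ∀ Λ ∈ c, InvariantSet f Λ) :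
    InvariantSet f (⋃₀ c) := by
  rintro t ht x ⟨Λ, hΛ, hx⟩
  exact ⟨Λ, hΛ, hc Λ hΛ t ht x hx⟩

end Orbits

theorem closure_sUnion_subset_closure_inter {X : Type*} [TopologicalSpace X] {R : Set X}
    {c : Set (Set X)} (hc : ∀ Λ ∈ c, Λ ⊆ closure (R ∩ Λ)) :
    closure (⋃₀ c) ⊆ closure (R ∩ closure (⋃₀ c)) := by
  refine closure_minimal (sUnion_subset fun Λ hΛ => (hc Λ hΛ).trans ?_) isClosed_closure
  gcongr
  exact (subset_sUnion_of_mem hΛ).trans subset_closure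

/-- Topological transitivity of the subsystem `(Λ, f)`: the motions starting in any nonempty
relatively open subset of `Λ` visit every other one. Relatively open subsets are encoded as traces
on `Λ` of open subsets of `X`. -/
def TopologicallyTransitiveOn {X : Type*} [MetricSpace X] (f : ℝ → X → X) (Λ : Set X) : Prop :=
  ∀ U V : Set X, IsOpen U → IsOpen V → (U ∩ Λ).Nonempty → (V ∩ Λ).Nonempty →
    ∃ x ∈ U ∩ Λ, (posOrbit f x ∩ V).Nonempty

section Transitivity

variable {X : Type*} [MetricSpace X] {f : ℝ → X → X}

theorem topologicallyTransitiveOn_of_subset_closure_posOrbit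
    (hcont : ∀ t ≥ 0, Continuous (f t)) (hzero : ∀ x, f 0 x = x)
    (hadd : ∀ s t : ℝ, 0 ≤ s → 0 ≤ t → ∀ x, f s (f t x) = f (s + t) x)
    {Λ : Set X} (hinv : InvariantSet f Λ) {x : X} (hxΛ : x ∈ Λ)
    (horbit : Λ ⊆ closure (posOrbit f x))
    (hrec : Λ ⊆ closure ({x | BirkhoffRecurrent f x} ∩ Λ)) :
    TopologicallyTransitiveOn f Λ := by
  rintro U V hU hV ⟨u, huU, huΛ⟩ ⟨v, hvV, hvΛ⟩
  obtain ⟨_, hsU, s, hs : 0 ≤ s, rfl⟩ := mem_closure_iff.1 (horbit huΛ) U hU huU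
  obtain ⟨z, hzV, hzrec, hzΛ⟩ := mem_closure_iff.1 (hrec hvΛ) V hV hvV
  obtain ⟨t, hst, htz⟩ :=
    frequently_atTop.1 (hzrec.frequently_mem_s2 (hzero z) (hV.mem_nhds hzV)) s
  have ht : 0 ≤ t := hs.trans hst
  obtain ⟨_, hrV : f t _ ∈ V, r, hr : 0 ≤ r, rfl⟩ :=
    mem_closure_iff.1 (horbit hzΛ) (f t ⁻¹' V) (hV.preimage (hcont t ht)) htz
  -- `r` may be smaller than `s`, but `t ≥ s` makes `t + r - s` a legitimate waiting time.
  have hwait : 0 ≤ t + r - s := by linarith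
  have hfollow : f (t + r - s) (f s x) = f t (f r x) := by
    rw [hadd _ _ hwait hs, hadd _ _ ht hr, sub_add_cancel]
  exact ⟨f s x, ⟨hsU, hinv s hs x hxΛ⟩,
    posOrbit_inter_nonempty_iff.2 ⟨_, hwait, hfollow ▸ hrV⟩⟩

protected theorem TopologicallyTransitiveOn.closure {Λ : Set X}
    (hΛ : TopologicallyTransitiveOn f Λ) : TopologicallyTransitiveOn f (closure Λ) := by
  intro U V hU hV hUΛ hVΛ
  rw [inter_comm, closure_inter_open_nonempty_iff hU, inter_comm] at hUΛ
  rw [inter_comm, closure_inter_open_nonempty_iff hV, inter_comm] at hVΛ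
  obtain ⟨x, ⟨hxU, hxΛ⟩, hxV⟩ := hΛ U V hU hV hUΛ hVΛ
  exact ⟨x, ⟨hxU, subset_closure hxΛ⟩, hxV⟩

protected theorem TopologicallyTransitiveOn.sUnion {c : Set (Set X)} (hdir : DirectedOn (· ⊆ ·) c)
    (hc : ∀ Λ ∈ c, TopologicallyTransitiveOn f Λ) : TopologicallyTransitiveOn f (⋃₀ c) := by
  rintro U V hU hV ⟨u, huU, A, hA, huA⟩ ⟨v, hvV, B, hB, hvB⟩
  obtain ⟨C, hC, hAC, hBC⟩ := hdir A hA B hB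
  obtain ⟨x, ⟨hxU, hxC⟩, hxV⟩ := hc C hC U V hU hV ⟨u, huU, hAC huA⟩ ⟨v, hvV, hBC hvB⟩
  exact ⟨x, ⟨hxU, C, hC, hxC⟩, hxV⟩

theorem TopologicallyTransitiveOn.dense_setOf_posOrbit_inter_nonempty {Λ V : Set X}
    (hΛ : TopologicallyTransitiveOn f Λ) (hV : IsOpen V) (hVΛ : (V ∩ Λ).Nonempty) :
    Dense {p : Λ | (posOrbit f p ∩ V).Nonempty} := by
  refine dense_iff_inter_open.2 fun W hW ⟨w, hw⟩ => ?_
  obtain ⟨U, hU, rfl⟩ := isOpen_induced_iff.1 hW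
  obtain ⟨x, ⟨hxU, hxΛ⟩, hxV⟩ := hΛ U V hU hV ⟨w, hw, w.2⟩ hVΛ
  exact ⟨⟨x, hxΛ⟩, hxU, hxV⟩

theorem TopologicallyTransitiveOn.exists_subset_closure_posOrbit [SecondCountableTopology X]
    {Λ : Set X} [BaireSpace Λ] (hΛ : TopologicallyTransitiveOn f Λ) (hne : Λ.Nonempty)
    (hcont : ∀ t ≥ 0, Continuous (f t)) : ∃ x ∈ Λ, Λ ⊆ closure (posOrbit f x) := by
  let B : Set (Set X) := {V ∈ countableBasis X | (V ∩ Λ).Nonempty}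
  have hBopen : ∀ V ∈ B, IsOpen V := fun V hV => isOpen_of_mem_countableBasis hV.1
  have hdense : Dense (⋂ V ∈ B, {p : Λ | (posOrbit f p ∩ V).Nonempty}) :=
    dense_biInter_of_isOpen
      (fun V hV => (isOpen_setOf_posOrbit_inter_nonempty hcont (hBopen V hV)).preimage
        continuous_subtype_val)
      ((countable_countableBasis X).mono (sep_subset _ _))
      (fun V hV => hΛ.dense_setOf_posOrbit_inter_nonempty (hBopen V hV) hV.2)
  have : Nonempty Λ := hne.to_subtype
  obtain ⟨p, hp⟩ := hdense.nonempty
  refine ⟨p, p.2, fun y hy => (isBasis_countableBasis X).mem_closure_iff.2 fun V hV hyV => ?_⟩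
  rw [inter_comm]
  exact mem_iInter₂.1 hp V ⟨hV, y, hyV, hy⟩

theorem ChaoticOn.closure_sUnion [SecondCountableTopology X]
    (hcont : ∀ t ≥ 0, Continuous (f t)) (hzero : ∀ x, f 0 x = x)
    (hadd : ∀ s t : ℝ, 0 ≤ s → 0 ≤ t → ∀ x, f s (f t x) = f (s + t) x)
    {c : Set (Set X)} [BaireSpace (closure (⋃₀ c))] (hne : c.Nonempty)
    (hdir : DirectedOn (· ⊆ ·) c) (hinv : ∀ Λ ∈ c, InvariantSet f Λ)
    (hc : ∀ Λ ∈ c, ChaoticOn f Λ) : ChaoticOn f (closure (⋃₀ c)) := by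
  have htrans : ∀ Λ ∈ c, TopologicallyTransitiveOn f Λ := fun Λ hΛ => by
    obtain ⟨⟨x, hx, horbit⟩, hrec, -⟩ := hc Λ hΛ
    exact topologicallyTransitiveOn_of_subset_closure_posOrbit hcont hzero hadd (hinv Λ hΛ) hx
      horbit hrec
  obtain ⟨Λ, hΛ⟩ := hne
  have hsub : Λ ⊆ closure (⋃₀ c) := (subset_sUnion_of_mem hΛ).trans subset_closure
  obtain ⟨-, -, x, hx, y, hy, hxy⟩ := hc Λ hΛ
  exact ⟨(TopologicallyTransitiveOn.sUnion hdir htrans).closure.exists_subset_closure_posOrbit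
      ⟨x, hsub hx⟩ hcont,
    closure_sUnion_subset_closure_inter fun Λ hΛ => (hc Λ hΛ).2.1,
    x, hsub hx, y, hsub hy, hxy⟩

end Transitivity

theorem exists_maximal_chaotic_subsystem_general {X : Type*} [MetricSpace X] [SeparableSpace X]
    (hBaire : ∀ K : Set X, IsClosed K → BaireSpace K) {f : ℝ → X → X}
    (hcont : ∀ t ≥ 0, Continuous (f t)) (hzero : ∀ x, f 0 x = x)
    (hadd : ∀ s t : ℝ, 0 ≤ s → 0 ≤ t → ∀ x, f s (f t x) = f (s + t) x)
    {Λ₀ : Set X} (hΛ₀ : IsClosed Λ₀ ∧ InvariantSet f Λ₀ ∧ ChaoticOn f Λ₀) :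
    ∃ Λ : Set X, Λ₀ ⊆ Λ ∧ IsClosed Λ ∧ InvariantSet f Λ ∧ ChaoticOn f Λ ∧
      ∀ Λ' : Set X, IsClosed Λ' → InvariantSet f Λ' → Λ ⊂ Λ' → ¬ ChaoticOn f Λ' := by
  have : SecondCountableTopology X := UniformSpace.secondCountable_of_separable X
  let S : Set (Set X) := {Λ | IsClosed Λ ∧ InvariantSet f Λ ∧ ChaoticOn f Λ}
  have closure_sUnion_mem : ∀ c ⊆ S, IsChain (· ⊆ ·) c → c.Nonempty → closure (⋃₀ c) ∈ S := by
    intro c hcS hchain hne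
    have : BaireSpace (closure (⋃₀ c)) := hBaire _ isClosed_closure
    have hinv : ∀ Λ ∈ c, InvariantSet f Λ := fun Λ hΛ => (hcS hΛ).2.1
    exact ⟨isClosed_closure, (InvariantSet.sUnion hinv).closure hcont,
      ChaoticOn.closure_sUnion hcont hzero hadd hne hchain.directedOn hinv
        fun Λ hΛ => (hcS hΛ).2.2⟩
  obtain ⟨Λ, hsub, hmax⟩ := zorn_subset_nonempty S
    (fun c hcS hchain hne => ⟨closure (⋃₀ c), closure_sUnion_mem c hcS hchain hne,
      fun Λ hΛ => (subset_sUnion_of_mem hΛ).trans subset_closure⟩) Λ₀ hΛ₀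
  obtain ⟨hclosed, hinv, hchaotic⟩ := hmax.prop
  exact ⟨Λ, hsub, hclosed, hinv, hchaotic, fun Λ' hclosed' hinv' hlt hchaotic' =>
    hmax.not_prop_of_gt hlt ⟨hclosed', hinv', hchaotic'⟩⟩

/-- a not completely non-chaotic system has a maximal chaotic
subsystem. -/
theorem exists_maximal_chaotic_subsystem {X : Type*} [MetricSpace X] [CompleteSpace X]
    [SeparableSpace X] (f : ℝ → X → X) (hf : IsSemiflow f)
    (h : ∃ Λ₀ : Set X, Λ₀.Nonempty ∧ IsClosed Λ₀ ∧ InvariantSet f Λ₀ ∧ ChaoticOn f Λ₀) :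
    ∃ Λ : Set X, Λ.Nonempty ∧ IsClosed Λ ∧ InvariantSet f Λ ∧ ChaoticOn f Λ ∧
      ∀ Λ' : Set X, IsClosed Λ' → InvariantSet f Λ' → Λ ⊂ Λ' → ¬ ChaoticOn f Λ' := by
  obtain ⟨Λ₀, hne, hΛ₀⟩ := h
  obtain ⟨Λ, hsub, hΛ⟩ := exists_maximal_chaotic_subsystem_general
    (fun K hK => have := hK.completeSpace_coe; inferInstance) (fun _ => hf.continuous)
    hf.2.1 hf.2.2 hΛ₀
  exact ⟨Λ, hne.mono hsub, hΛ⟩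
end

section
/- Let X be a nonempty Polish space without isolated points, and let R ⊆ X × X be a symmetric relation. If there is a dense Gδ subset A of X such that for each x ∈ A the section R(x) = {y ∈ X : (x,y) ∈ R} contains a dense Gδ subset of X, then there is a dense uncountable subset B of X such that (x,y) ∈ R whenever x, y ∈ B with x ≠ y. -/
open Filter Topology Metric Set TopologicalSpace

/-!
The clique is chosen point by point along a well-order of type `ω₁`. At each stage only countably
many points have been chosen, so by Baire's theorem comeagrely many points are related to, and
distinct from, all of them; such a point can be found in any prescribed nonempty open set. Since
there are `ω₁` stages, the prescribed sets can run through a whole countable basis.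
-/

open scoped Cardinal

theorem exists_forall_lt_rel {ι : Type*} [LT ι] [WellFoundedLT ι] {α : ι → Type*}
    {r : ∀ i j, α i → α j → Prop}
    (h : ∀ i (g : ∀ j < i, α j), ∃ y : α i, ∀ j hj, r j i (g j hj) y) :
    ∃ f : ∀ i, α i, ∀ i j, i < j → r i j (f i) (f j) := by
  choose next hnext using h
  refine ⟨wellFounded_lt.fix next, fun i j hij => ?_⟩
  rw [wellFounded_lt.fix_eq next j]
  exact hnext j (fun k _ => wellFounded_lt.fix next k) i hij

theorem exists_uncountable_wellOrder_countable_Iio :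
    ∃ (ι : Type) (_ : LinearOrder ι), WellFoundedLT ι ∧ Uncountable ι ∧
      ∀ i : ι, (Iio i).Countable := by
  refine ⟨(ℵ₁ : Cardinal.{0}).ord.ToType, inferInstance, inferInstance, ?_, fun i => ?_⟩
  · rw [← Cardinal.aleph0_lt_mk_iff, Cardinal.mk_ord_toType]
    exact Cardinal.aleph0_lt_aleph_one
  · rw [← Cardinal.le_aleph0_iff_set_countable, ← Cardinal.lt_aleph_one_iff]
    simpa only [Cardinal.mk_ord_toType] using Cardinal.mk_Iio_lt i (by simp)

theorem exists_surjective_of_infinite_of_countable (ι κ : Type*) [Infinite ι] [Countable κ]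
    [Nonempty κ] : ∃ e : ι → κ, Function.Surjective e := by
  obtain ⟨e⟩ := nonempty_embedding_nat κ
  exact Function.exists_surjective_iff.2
    ⟨inferInstance, ⟨e.trans (Infinite.natEmbedding ι)⟩⟩

section CountableInterFilter

variable {X : Type*} {l : Filter X} [CountableInterFilter l] {r : X → X → Prop}

theorem exists_forall_mem_forall_lt_rel {ι : Type*} [Preorder ι] [WellFoundedLT ι]
    (hι : ∀ i : ι, (Iio i).Countable) {s : ι → Set X} (hs : ∀ i, ∃ᶠ x in l, x ∈ s i)
    (hr : ∀ᶠ x in l, ∀ᶠ y in l, r x y) :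
    ∃ f : ι → X, (∀ i, f i ∈ s i) ∧ ∀ i j, i < j → r (f i) (f j) := by
  obtain ⟨f, hf⟩ := exists_forall_lt_rel
    (α := fun i => {x // x ∈ s i ∧ ∀ᶠ y in l, r x y}) (r := fun _ _ x y => r x y) fun i g => by
      have hrel : ∀ᶠ y in l, ∀ j (hj : j < i), r (g j hj) y :=
        (eventually_countable_ball (hι i)).2 fun j hj => (g j hj).2.2
      obtain ⟨y, hys, hyr, hgy⟩ := ((hs i).and_eventually (hr.and hrel)).exists
      exact ⟨⟨y, hys, hyr⟩, hgy⟩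
  exact ⟨fun i => f i, fun i => (f i).2.1, hf⟩

theorem exists_not_countable_pairwise_forall_inter_nonempty (hl : l ≤ cofinite) [Std.Symm r]
    (hr : ∀ᶠ x in l, ∀ᶠ y in l, r x y) {κ : Type*} [Countable κ] [Nonempty κ] {s : κ → Set X}
    (hs : ∀ k, ∃ᶠ x in l, x ∈ s k) :
    ∃ B : Set X, ¬ B.Countable ∧ B.Pairwise r ∧ ∀ k, (s k ∩ B).Nonempty := by
  obtain ⟨ι, _, _, _, hι⟩ := exists_uncountable_wellOrder_countable_Iio
  obtain ⟨e, he⟩ := exists_surjective_of_infinite_of_countable ι κ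
  have hne : ∀ᶠ x in l, ∀ᶠ y in l, x ≠ y ∧ r x y :=
    hr.mono fun x hx => by
      filter_upwards [(eventually_cofinite_ne x).filter_mono hl, hx] with y hyx hxy
      exact ⟨hyx.symm, hxy⟩
  obtain ⟨f, hfs, hf⟩ := exists_forall_mem_forall_lt_rel hι (fun i => hs (e i)) hne
  have hinj : Function.Injective f := Function.Injective.of_lt_imp_ne fun i j hij => (hf i j hij).1
  refine ⟨range f, fun hB => ?_, ?_, fun k => ?_⟩
  · exact not_countable_univ (by simpa only [preimage_range] using hB.preimage hinj)
  · rintro _ ⟨i, rfl⟩ _ ⟨j, rfl⟩ hij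
    obtain h | h := (ne_of_apply_ne f hij).lt_or_gt
    · exact (hf i j h).2
    · exact symm (hf j i h).2
  · obtain ⟨i, rfl⟩ := he k
    exact ⟨f i, hfs i, mem_range_self i⟩

end CountableInterFilter

section Baire

variable {X : Type*} [TopologicalSpace X]

theorem residual_le_cofinite [T1Space X] [PerfectSpace X] : residual X ≤ cofinite :=
  le_cofinite_iff_compl_singleton_mem.2 fun x =>
    residual_of_dense_open isOpen_compl_singleton (dense_compl_singleton x)

theorem frequently_residual_mem_of_isOpen [BaireSpace X] {U : Set X} (hU : IsOpen U)
    (hne : U.Nonempty) : ∃ᶠ x in residual X, x ∈ U :=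
  not_isMeagre_of_isOpen hU hne

theorem huang_ye_lemma_general [BaireSpace X] [SecondCountableTopology X] [T1Space X]
    [PerfectSpace X] [Nonempty X] {r : X → X → Prop} [Std.Symm r]
    (hr : ∀ᶠ x in residual X, ∀ᶠ y in residual X, r x y) :
    ∃ B : Set X, Dense B ∧ ¬ B.Countable ∧ B.Pairwise r := by
  have hbasis := isBasis_countableBasis X
  have : Nonempty (countableBasis X) := (Nonempty.of_sUnion_eq_univ hbasis.sUnion_eq).to_subtype
  obtain ⟨B, hBc, hBr, hB⟩ := exists_not_countable_pairwise_forall_inter_nonempty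
    residual_le_cofinite hr (s := ((↑) : countableBasis X → Set X)) fun U =>
      frequently_residual_mem_of_isOpen (isOpen_of_mem_countableBasis U.2)
        (nonempty_of_mem_countableBasis U.2)
  exact ⟨B, hbasis.dense_iff.2 fun U hU _ => hB ⟨U, hU⟩, hBc, hBr⟩

end Baire

/-- Huang–Ye lemma: a symmetric relation whose sections over a
dense Gδ contain dense Gδ sets admits a dense uncountable "clique". -/
theorem huang_ye_lemma {X : Type*} [MetricSpace X] [CompleteSpace X]
    [SeparableSpace X] [Nonempty X] (hiso : ∀ x : X, (𝓝[≠] x).NeBot)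
    (R : Set (X × X)) (hsym : ∀ x y : X, (x, y) ∈ R → (y, x) ∈ R)
    (A : Set X) (hAd : Dense A) (hAg : IsGδ A)
    (hsec : ∀ x ∈ A, ∃ S : Set X, Dense S ∧ IsGδ S ∧ S ⊆ {y : X | (x, y) ∈ R}) :
    ∃ B : Set X, Dense B ∧ ¬ B.Countable ∧
      ∀ x ∈ B, ∀ y ∈ B, x ≠ y → (x, y) ∈ R := by
  have : SecondCountableTopology X := UniformSpace.secondCountable_of_separable X
  have : PerfectSpace X := perfectSpace_iff_forall_not_isolated.2 hiso
  have : Std.Symm fun x y => (x, y) ∈ R := ⟨hsym⟩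
  have hR : ∀ᶠ x in residual X, ∀ᶠ y in residual X, (x, y) ∈ R :=
    eventually_residual.2 ⟨A, hAg, hAd, fun x hx =>
      let ⟨S, hSd, hSg, hSR⟩ := hsec x hx
      eventually_residual.2 ⟨S, hSg, hSd, hSR⟩⟩
  obtain ⟨B, hBd, hBc, hBR⟩ := huang_ye_lemma_general hR
  exact ⟨B, hBd, hBc, fun x hx y hy => hBR hx hy⟩
end

section
/- Let (X,d) be a Polish space and f a continuous semi-flow on X. If f is topologically quasi-transitive and the Birkhoff recurrent points of f are dense in X, then f is topologically transitive: there exist z ∈ X and ε > 0 such that {f^t(z) : t ≥ ε} is dense in X. -/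
open Filter Topology Metric Set TopologicalSpace

/-!
Let the orbit of `x` be dense and fix a time `a`. The orbit segment up to time `a` is compact, so
`X` is the union of this segment and the closure of the orbit of `x` from time `a` on. A recurrent
point lying on the segment is a limit of its own orbit from time `a` on, which is part of that of
`x`; hence every recurrent point belongs to the closure, and the recurrent points are dense.
-/

section OrbitFrom

variable {T X : Type*}

/-- The forward orbit of `x` from time `a` on, whose density for some `a > 0` is topological
transitivity. Times range over any preorder, which covers both discrete and continuous time. -/
def orbitFrom [Preorder T] (f : T → X → X) (a : T) (x : X) : Set X :=
  (fun t ↦ f t x) '' Ici a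

theorem orbitFrom_apply_subset [AddMonoid T] [Preorder T] [AddLeftMono T] {f : T → X → X}
    (hadd : ∀ s t, 0 ≤ s → 0 ≤ t → ∀ x, f s (f t x) = f (s + t) x)
    {a s : T} (ha : 0 ≤ a) (hs : 0 ≤ s) (x : X) :
    orbitFrom f a (f s x) ⊆ orbitFrom f a x := by
  rintro _ ⟨t, hat, rfl⟩
  exact ⟨t + s, le_add_of_le_of_nonneg hat hs, (hadd t s (ha.trans hat) hs x).symm⟩

theorem closure_orbitFrom_eq_union [LinearOrder T] [TopologicalSpace T] [CompactIccSpace T]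
    [TopologicalSpace X] [T2Space X] {f : T → X → X} {a b : T} {x : X} (hab : a ≤ b)
    (hcont : ContinuousOn (fun t ↦ f t x) (Icc a b)) :
    closure (orbitFrom f a x) = (fun t ↦ f t x) '' Icc a b ∪ closure (orbitFrom f b x) := by
  have hclosed : IsClosed ((fun t ↦ f t x) '' Icc a b) :=
    (isCompact_Icc.image_of_continuousOn hcont).isClosed
  rw [orbitFrom, orbitFrom, ← Icc_union_Ici_eq_Ici hab, image_union, closure_union,
    hclosed.closure_eq]

end OrbitFrom

section Semiflow

variable {X : Type*} [MetricSpace X] {f : ℝ → X → X}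

theorem IsSemiflow.continuousOn_orbit_s6 (hf : IsSemiflow f) (x : X) :
    ContinuousOn (fun t ↦ f t x) (Ici 0) :=
  hf.1.comp (Continuous.prodMk_left x).continuousOn fun _ ht ↦ ⟨ht, mem_univ x⟩

theorem BirkhoffRecurrent.mem_closure_orbitFrom {y : X} (hy : BirkhoffRecurrent f y)
    (h0 : f 0 y = y) {a : ℝ} (ha : 0 ≤ a) : y ∈ closure (orbitFrom f a y) := by
  refine Metric.mem_closure_iff.2 fun ε hε ↦ ?_
  obtain ⟨_, -, hreturn⟩ := hy ε hε
  obtain ⟨t, hat, -, hdist⟩ := hreturn a ha 0 le_rfl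
  exact ⟨f t y, ⟨t, hat.le, rfl⟩, by rwa [h0] at hdist⟩

end Semiflow

theorem quasiTransitive_and_recurrent_dense_implies_transitive_general {T X : Type*}
    [AddMonoid T] [LinearOrder T] [AddLeftMono T] [TopologicalSpace T] [CompactIccSpace T]
    [TopologicalSpace X] [T2Space X] {f : T → X → X} {a : T} {x : X} (ha : 0 ≤ a)
    (hcont : ContinuousOn (fun t ↦ f t x) (Icc 0 a))
    (hadd : ∀ s t, 0 ≤ s → 0 ≤ t → ∀ y, f s (f t y) = f (s + t) y)
    (hx : Dense (orbitFrom f 0 x)) (hrec : Dense {y | y ∈ closure (orbitFrom f a y)}) :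
    Dense (orbitFrom f a x) := by
  suffices hsub : {y | y ∈ closure (orbitFrom f a y)} ⊆ closure (orbitFrom f a x) from
    dense_closure.1 (hrec.mono hsub)
  intro y hy
  have hcover : y ∈ (fun t ↦ f t x) '' Icc 0 a ∪ closure (orbitFrom f a x) :=
    closure_orbitFrom_eq_union ha hcont ▸ hx y
  rcases hcover with ⟨s, hs, rfl⟩ | hmem
  · exact closure_mono (orbitFrom_apply_subset hadd ha hs.1 x) hy
  · exact hmem

/-- quasi-transitivity together with density of Birkhoff recurrent
points implies topological transitivity. -/
theorem quasiTransitive_and_recurrent_dense_implies_transitive {X : Type*}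
    [MetricSpace X] [CompleteSpace X] [SeparableSpace X]
    (f : ℝ → X → X) (hf : IsSemiflow f)
    (h1 : QuasiTransitive f) (h2 : Dense {x : X | BirkhoffRecurrent f x}) :
    ∃ z : X, ∃ ε : ℝ, 0 < ε ∧ Dense ((fun t => f t z) '' Set.Ici ε) := by
  obtain ⟨x, hx⟩ := h1
  exact ⟨x, 1, one_pos, quasiTransitive_and_recurrent_dense_implies_transitive_general zero_le_one
    ((hf.continuousOn_orbit_s6 x).mono Icc_subset_Ici_self) hf.2.2 hx
    (h2.mono fun y hy ↦ hy.mem_closure_orbitFrom (hf.2.1 y) zero_le_one)⟩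
end

section
/- Let (X,d) be a compact metric space and f a continuous semi-flow on X. Let x, y ∈ X and ε > ε' > 0. If limsup_{t→+∞} d(f^t(x), f^t(y)) ≥ ε, then the set {t ≥ 0 : d(f^t(x), f^t(y)) ≥ ε'} has infinite Lebesgue measure. -/
open Filter Topology Metric Set TopologicalSpace

/-!
Orbits that stay in a compact set are uniformly continuous on `[0, ∞)`, because the points of a
compact set move uniformly little in short time. Hence `t ↦ dist (f t x) (f t y)` is uniformly
continuous, and each time at which it exceeds a level between `ε'` and `ε` starts an interval of a
fixed length `δ` on which it stays above `ε'`. A set of finite measure cannot contain such intervals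
arbitrarily far out, since the measure of its tails tends to zero.
-/

section Tails

open MeasureTheory

variable {α : Type*} [Nonempty α] [Preorder α] [NoTopOrder α]
  [(atTop : Filter α).IsCountablyGenerated] [TopologicalSpace α] [ClosedIciTopology α]
  [MeasurableSpace α] [OpensMeasurableSpace α]

lemma tendsto_measure_inter_Ici_atTop_zero {μ : Measure α} {s : Set α} (hs : μ s ≠ ⊤) :
    Tendsto (fun t ↦ μ (s ∩ Ici t)) atTop (𝓝 0) := by
  have : IsFiniteMeasure (μ.restrict s) := isFiniteMeasure_restrict.2 hs
  have hempty : ⋂ t : α, Ici t = ∅ :=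
    not_nonempty_iff_eq_empty.1 <|
      nonempty_iInter_Ici_iff.not.2 (by simpa only [range_id'] using not_bddAbove_univ)
  have htail : Tendsto (fun t ↦ μ.restrict s (Ici t)) atTop (𝓝 (μ.restrict s (⋂ t, Ici t))) :=
    tendsto_measure_iInter_atTop (fun _ ↦ measurableSet_Ici.nullMeasurableSet) antitone_Ici
      ⟨Classical.arbitrary α, measure_ne_top _ _⟩
  simpa only [Measure.restrict_apply measurableSet_Ici, inter_comm, hempty, measure_empty]
    using htail

lemma measure_eq_top_of_frequently_le_measure_inter_Ici {μ : Measure α} {s : Set α} {c : ENNReal}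
    (hc : c ≠ 0) (h : ∃ᶠ t in atTop, c ≤ μ (s ∩ Ici t)) : μ s = ⊤ := by
  by_contra hs
  have hsmall : ∀ᶠ t in atTop, μ (s ∩ Ici t) < c :=
    (tendsto_measure_inter_Ici_atTop_zero hs).eventually_lt_const (pos_iff_ne_zero.2 hc)
  exact h (hsmall.mono fun _ ↦ not_le.2)

end Tails

lemma volume_superlevel_eq_top_of_uniformContinuousOn {g : ℝ → ℝ} {a b c : ℝ}
    (hg : UniformContinuousOn g (Ici a)) (hbc : b < c) (hfreq : ∃ᶠ t in atTop, c ≤ g t) :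
    MeasureTheory.volume {t : ℝ | a ≤ t ∧ b ≤ g t} = ⊤ := by
  obtain ⟨δ, hδ, hgδ⟩ := Metric.uniformContinuousOn_iff_le.1 hg (c - b) (sub_pos.2 hbc)
  refine measure_eq_top_of_frequently_le_measure_inter_Ici (ENNReal.ofReal_pos.2 hδ).ne' ?_
  refine (hfreq.and_eventually (eventually_ge_atTop a)).mono fun t ⟨hct, hat⟩ ↦ ?_
  have hsub : Icc t (t + δ) ⊆ {u | a ≤ u ∧ b ≤ g u} ∩ Ici t := by
    rintro u ⟨htu, hut⟩
    have hau : a ≤ u := hat.trans htu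
    have hclose : dist (g t) (g u) ≤ c - b :=
      hgδ t hat u hau (by rw [dist_comm, Real.dist_eq, abs_of_nonneg] <;> linarith)
    have hdrop : g t - g u ≤ c - b := (le_abs_self _).trans hclose
    have hbu : b ≤ g u := by linarith only [hct, hdrop]
    exact ⟨⟨hau, hbu⟩, htu⟩
  calc ENNReal.ofReal δ = MeasureTheory.volume (Icc t (t + δ)) := by
        rw [Real.volume_Icc, add_sub_cancel_left]
    _ ≤ _ := MeasureTheory.measure_mono hsub

namespace IsSemiflow

variable {X : Type*} [MetricSpace X] {f : ℝ → X → X}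

lemma exists_forall_mem_dist_flow_self_lt (hf : IsSemiflow f) {K : Set X} (hK : IsCompact K) {η : ℝ}
    (hη : 0 < η) : ∃ δ > 0, ∀ s, 0 ≤ s → s < δ → ∀ z ∈ K, dist (f s z) z < η := by
  obtain ⟨hcont, hzero, -⟩ := hf
  obtain ⟨V, hV, hVK⟩ := hK.mem_uniformity_of_prod (f := f)
    (hcont.mono (prod_mono_right (subset_univ K))) self_mem_Ici (Metric.dist_mem_uniformity hη)
  obtain ⟨δ, hδ, hδV⟩ := mem_nhdsGE_iff_exists_Ico_subset.1 hV
  exact ⟨δ, hδ, fun s hs hsδ z hz ↦ by simpa [hzero] using hVK s (hδV ⟨hs, hsδ⟩) z hz⟩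

lemma uniformContinuousOn_orbit (hf : IsSemiflow f) {x : X}
    (hx : IsCompact (closure (posOrbit f x))) :
    UniformContinuousOn (fun t ↦ f t x) (Ici 0) := by
  rw [Metric.uniformContinuousOn_iff]
  intro η hη
  obtain ⟨δ, hδ, hmove⟩ := hf.exists_forall_mem_dist_flow_self_lt hx hη
  refine ⟨δ, hδ, fun s hs t ht hst ↦ ?_⟩
  wlog hle : s ≤ t generalizing s t
  · rw [dist_comm] at hst ⊢
    exact this t ht s hs hst (le_of_not_ge hle)
  have hflow : f (t - s) (f s x) = f t x := by
    rw [hf.2.2 _ _ (sub_nonneg.2 hle) hs, sub_add_cancel]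
  have hshort : t - s < δ := by
    rwa [dist_comm, Real.dist_eq, abs_of_nonneg (sub_nonneg.2 hle)] at hst
  rw [dist_comm, ← hflow]
  exact hmove _ (sub_nonneg.2 hle) hshort _ (subset_closure (mem_image_of_mem _ hs))

end IsSemiflow

theorem compact_separation_times_infinite_measure_general {X : Type*} [MetricSpace X]
    {f : ℝ → X → X} (hf : IsSemiflow f) {x y : X}
    (hx : IsCompact (closure (posOrbit f x))) (hy : IsCompact (closure (posOrbit f y)))
    {ε ε' : ℝ} (hεε' : ε' < ε)
    (hls : (ε : EReal) ≤ limsup (fun t : ℝ ↦ (dist (f t x) (f t y) : EReal)) atTop) :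
    MeasureTheory.volume {t : ℝ | 0 ≤ t ∧ ε' ≤ dist (f t x) (f t y)} = ⊤ := by
  obtain ⟨c, hε'c, hcε⟩ := exists_between hεε'
  have hfreq : ∃ᶠ t in atTop, c ≤ dist (f t x) (f t y) :=
    (frequently_lt_of_lt_limsup (by isBoundedDefault)
      ((EReal.coe_lt_coe_iff.2 hcε).trans_le hls)).mono
      fun _ hlt ↦ (EReal.coe_lt_coe_iff.1 hlt).le
  have hdist : UniformContinuousOn (fun t ↦ dist (f t x) (f t y)) (Ici 0) :=
    uniformContinuousOn_iff_restrict.2 <|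
      (uniformContinuousOn_iff_restrict.1 (hf.uniformContinuousOn_orbit hx)).dist
        (uniformContinuousOn_iff_restrict.1 (hf.uniformContinuousOn_orbit hy))
  exact volume_superlevel_eq_top_of_uniformContinuousOn hdist hε'c hfreq

/-- on a compact space, limsup separation by `ε` gives a set of
`ε'`-separation times of infinite Lebesgue measure. -/
theorem compact_separation_times_infinite_measure {X : Type*} [MetricSpace X]
    [CompactSpace X] (f : ℝ → X → X) (hf : IsSemiflow f) (x y : X)
    (ε ε' : ℝ) (hε' : 0 < ε') (hεε' : ε' < ε)
    (hls : (ε : EReal) ≤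
      Filter.limsup (fun t : ℝ => (dist (f t x) (f t y) : EReal)) Filter.atTop) :
    MeasureTheory.volume {t : ℝ | 0 ≤ t ∧ ε' ≤ dist (f t x) (f t y)} = ⊤ :=
  compact_separation_times_infinite_measure_general hf isClosed_closure.isCompact
    isClosed_closure.isCompact hεε' hls
end

section
/- Let (X,d) be a Polish space, f a continuous semi-flow on X, and let 𝒞 be a nonempty family of nonempty closed f-invariant subsets of X that is totally ordered by inclusion, such that for each C ∈ 𝒞 the restricted semi-flow on C is topologically transitive in the open-set sense: for every pair of nonempty relatively open subsets U, V of C there exist t ≥ 1 and v ∈ V with f^t(v) ∈ U. Then F = closure(⋃_{C ∈ 𝒞} C) is a closed f-invariant subset of X and the restricted semi-flow on F is topologically transitive in the same open-set sense. -/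
open Filter Topology Metric Set TopologicalSpace

/-!
An open set meeting the closure of a union already meets the union. By directedness, two open
sets meeting the union both meet a single member of the family, and transitivity there supplies
the required orbit segment.
-/

theorem mapsTo_sUnion_self {X : Type*} {g : X → X} {S : Set (Set X)} (hg : ∀ s ∈ S, MapsTo g s s) :
    MapsTo g (⋃₀ S) (⋃₀ S) :=
  mapsTo_sUnion.2 fun s hs => (hg s hs).mono_right (subset_sUnion_of_mem hs)

/-- `IsTransitiveOn f J Λ` is topological transitivity on `Λ`, in the open-set sense, of the maps
`f t` with `t` in the set of times `J`. Relatively open subsets of `Λ` are encoded as traces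
`U ∩ Λ` of open sets `U`. -/
def IsTransitiveOn {T X : Type*} [TopologicalSpace X] (f : T → X → X) (J : Set T) (Λ : Set X) :
    Prop :=
  ∀ U V : Set X, IsOpen U → IsOpen V → (U ∩ Λ).Nonempty → (V ∩ Λ).Nonempty →
    ∃ t ∈ J, ∃ v ∈ V ∩ Λ, f t v ∈ U ∩ Λ

section Transitivity

variable {T X : Type*} [TopologicalSpace X] {f : T → X → X} {I J : Set T} {𝒞 : Set (Set X)}

theorem IsTransitiveOn.sUnion_of_directedOn (hdir : DirectedOn (· ⊆ ·) 𝒞)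
    (htr : ∀ C ∈ 𝒞, IsTransitiveOn f J C) : IsTransitiveOn f J (⋃₀ 𝒞) := by
  rintro U V hU hV ⟨x, hxU, A, hA, hxA⟩ ⟨y, hyV, B, hB, hyB⟩
  obtain ⟨C, hC, hAC, hBC⟩ := hdir A hA B hB
  obtain ⟨t, ht, v, hv, hfv⟩ := htr C hC U V hU hV ⟨x, hxU, hAC hxA⟩ ⟨y, hyV, hBC hyB⟩
  have hCsub : C ⊆ ⋃₀ 𝒞 := subset_sUnion_of_mem hC
  exact ⟨t, ht, v, ⟨hv.1, hCsub hv.2⟩, hfv.1, hCsub hfv.2⟩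

theorem IsTransitiveOn.of_subset_of_subset_closure {Λ Λ' : Set X} (htr : IsTransitiveOn f J Λ)
    (hsub : Λ ⊆ Λ') (hcl : Λ' ⊆ closure Λ) : IsTransitiveOn f J Λ' := by
  have meets {W : Set X} (hW : IsOpen W) : (W ∩ Λ').Nonempty → (W ∩ Λ).Nonempty :=
    fun ⟨x, hxW, hx⟩ => mem_closure_iff.1 (hcl hx) W hW hxW
  intro U V hU hV hUΛ' hVΛ'
  obtain ⟨t, ht, v, hv, hfv⟩ := htr U V hU hV (meets hU hUΛ') (meets hV hVΛ')
  exact ⟨t, ht, v, ⟨hv.1, hsub hv.2⟩, hfv.1, hsub hfv.2⟩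

theorem chain_union_transitive_general (hf : ∀ t ∈ I, Continuous (f t))
    (hdir : DirectedOn (· ⊆ ·) 𝒞) (hinv : ∀ C ∈ 𝒞, ∀ t ∈ I, MapsTo (f t) C C)
    (htr : ∀ C ∈ 𝒞, IsTransitiveOn f J C) :
    (∀ t ∈ I, MapsTo (f t) (closure (⋃₀ 𝒞)) (closure (⋃₀ 𝒞))) ∧
      IsTransitiveOn f J (closure (⋃₀ 𝒞)) :=
  ⟨fun t ht => (mapsTo_sUnion_self fun C hC => hinv C hC t ht).closure (hf t ht),
    (IsTransitiveOn.sUnion_of_directedOn hdir htr).of_subset_of_subset_closure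
      subset_closure Subset.rfl⟩

end Transitivity

theorem IsSemiflow.continuous_apply_s17 {X : Type*} [MetricSpace X] {f : ℝ → X → X}
    (hf : IsSemiflow f) {t : ℝ} (ht : 0 ≤ t) : Continuous (f t) :=
  hf.1.comp_continuous (Continuous.prodMk_right t) fun _ => ⟨ht, mem_univ _⟩

/-- the closure of the union of a chain of transitive closed
invariant sets is a transitive closed invariant set. -/
theorem chain_union_transitive {X : Type*} [MetricSpace X] [CompleteSpace X]
    [SeparableSpace X] (f : ℝ → X → X) (hf : IsSemiflow f)
    (𝒞 : Set (Set X)) (hne : 𝒞.Nonempty)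
    (hC : ∀ C ∈ 𝒞, C.Nonempty ∧ IsClosed C ∧ InvariantSet f C)
    (hchain : ∀ C₁ ∈ 𝒞, ∀ C₂ ∈ 𝒞, C₁ ⊆ C₂ ∨ C₂ ⊆ C₁)
    (htr : ∀ C ∈ 𝒞, ∀ U V : Set X, IsOpen U → IsOpen V →
      (U ∩ C).Nonempty → (V ∩ C).Nonempty →
      ∃ t : ℝ, 1 ≤ t ∧ ∃ v ∈ V ∩ C, f t v ∈ U ∩ C) :
    IsClosed (closure (⋃ C ∈ 𝒞, C)) ∧
    InvariantSet f (closure (⋃ C ∈ 𝒞, C)) ∧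
    ∀ U V : Set X, IsOpen U → IsOpen V →
      (U ∩ closure (⋃ C ∈ 𝒞, C)).Nonempty → (V ∩ closure (⋃ C ∈ 𝒞, C)).Nonempty →
      ∃ t : ℝ, 1 ≤ t ∧ ∃ v ∈ V ∩ closure (⋃ C ∈ 𝒞, C),
        f t v ∈ U ∩ closure (⋃ C ∈ 𝒞, C) := by
  have hdir : DirectedOn (· ⊆ ·) 𝒞 :=
    IsChain.directedOn fun C₁ h₁ C₂ h₂ _ => hchain C₁ h₁ C₂ h₂
  rw [← sUnion_eq_biUnion]
  exact ⟨isClosed_closure, chain_union_transitive_general (I := Ici 0) (J := Ici 1)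
    (fun _ ht => hf.continuous_apply_s17 ht) hdir (fun C h => (hC C h).2.2) htr⟩
end
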